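/- Let Γ be a finitely generated sofic group. Then there exist a finite set K with at least two elements, a nonempty closed Γ-invariant subset Y ⊆ K^Γ (for the shift action) on which Γ acts freely (i.e., for y ∈ Y and g ≠ 1 one has g·y ≠ y), and a Γ-invariant Borel probability measure on Y. -/

import Mathlib

open MeasureTheory

/-- The word length of an element of a free group (length of its reduced word). -/
def wordLength {n : ℕ} (w : FreeGroup (Fin n)) : ℕ := (FreeGroup.toWord w).length

/-- `p` is a `(Γ,r)`-vertex of the action `ρ` of the free group on a finite set:
two words of length at most `r` move `p` to the same point iff they have the same
image in `Γ`. -/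
def IsGammaRVertex {Γ : Type} [Group Γ] {n : ℕ} (γ : Fin n → Γ) {V : Type}
    (ρ : FreeGroup (Fin n) →* Equiv.Perm V) (r : ℕ) (p : V) : Prop :=
  ∀ w w' : FreeGroup (Fin n), wordLength w ≤ r → wordLength w' ≤ r →
    (ρ w p = ρ w' p ↔ FreeGroup.lift γ w = FreeGroup.lift γ w')

/-- `Γ` is sofic with respect to the generating tuple `γ`: for every `r ≥ 1` and `ε > 0`
there is a finite nonempty set with an action of the free group in which at least a
`(1-ε)` proportion of the points are `(Γ,r)`-vertices. -/
def IsSofic {Γ : Type} [Group Γ] {n : ℕ} (γ : Fin n → Γ) : Prop :=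
  ∀ r : ℕ, 1 ≤ r → ∀ ε : ℝ, 0 < ε →
    ∃ (V : Type) (_ : Fintype V) (_ : Nonempty V)
      (ρ : FreeGroup (Fin n) →* Equiv.Perm V),
      (1 - ε) * (Fintype.card V : ℝ) ≤
        ({p : V | IsGammaRVertex γ ρ r p}.ncard : ℝ)

/-- The (left) shift action of `Γ` on `Γ → K`. -/
def shiftMap {Γ : Type} [Group Γ] {K : Type} (g : Γ) (f : Γ → K) : Γ → K :=
  fun x => f (g⁻¹ * x)

/-!
Choose finite sets `T g`, each moved off itself by `g ≠ 1`, whose sizes grow along an enumeration of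
the group. In a sofic approximation, consider the colorings with `m` colors such that, near all good
points and for finitely many `g`, the pattern on `T g` does not recur on `g * T g`. A recurrence has
probability `m ^ (-#(T g))`, so a version of the Lovász local lemma produces such a coloring, with
`m` independent of the approximation because the `T g` grow; it is proved by Rosenfeld's counting
argument, in which coloring one more point multiplies the number of colorings without recurrence
by at least `2`.

Reading such a coloring along orbits turns the uniform measure into an almost invariant measure on
`Γ → Fin m`. Any limit of these is invariant and gives mass zero to each of the clopen sets of
functions with a recurrence, hence is carried by the closed invariant set of functions no translate
of which has a recurrence. A function fixed by `g ≠ 1` repeats on `g⁻¹ * T g⁻¹` its pattern on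
`T g⁻¹`, so the shift is free there.
-/

open scoped Finset NNReal Pointwise

section LocalLemma

variable {V K ι : Type*}

lemma ncard_mul_pow_le_ncard_of_injOn_domRestrict [Finite V] [Finite K] {B G : Set (V → K)}
    {A : Finset V} (hBG : B ⊆ G) (hG : DependsOn (· ∈ G) (A : Set V)ᶜ)
    (hB : B.InjOn (A : Set V)ᶜ.domRestrict) :
    B.ncard * Nat.card K ^ #A ≤ G.ncard := by
  have extend_eq (c : V → K) (x : A → K) (v : V) (hv : v ∈ (A : Set V)ᶜ) :
      Function.extend Subtype.val x c v = c v :=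
    Function.extend_apply' x c v fun ⟨a, ha⟩ => hv (ha ▸ a.2)
  have card_prod : (B ×ˢ (Set.univ : Set (A → K))).ncard = B.ncard * Nat.card K ^ #A := by
    simp [Set.ncard_prod, Set.ncard_univ, Nat.card_fun]
  rw [← card_prod]
  refine Set.ncard_le_ncard_of_injOn (fun q => Function.extend Subtype.val q.2 q.1) ?_ ?_
  · rintro ⟨c, x⟩ ⟨hc, -⟩
    exact (hG (extend_eq c x)).mpr (hBG hc)
  · rintro ⟨c, x⟩ ⟨hc, -⟩ ⟨c', x'⟩ ⟨hc', -⟩ h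
    obtain rfl : c = c' := hB hc hc' <| funext fun v => by
      simpa only [Set.domRestrict_apply, extend_eq _ _ v v.2] using congrFun h v
    obtain rfl : x = x' := funext fun a => by
      simpa only [Subtype.val_injective.extend_apply] using congrFun h a
    rfl

/-- A set `B` of colorings of `V`, thought of as a bad event with support `U`, in which every
point of the support lies in a set of `k` points of `U` whose colors are forced by the remaining
ones. A random coloring then lies in `B` with probability at most `|K| ^ (-k)`. -/
structure IsForcingEvent (B : Set (V → K)) (U : Finset V) (k : ℕ) : Prop where
  dependsOn : DependsOn (· ∈ B) (U : Set V)
  nonempty : U.Nonempty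
  exists_forced : ∀ v ∈ U, ∃ A ⊆ U, v ∈ A ∧ #A = k ∧ B.InjOn (A : Set V)ᶜ.domRestrict

/-- The colorings that avoid every event `bad i`, `i ∈ I`, whose support `U i` lies in `S`. -/
def avoiding (I : Finset ι) (bad : ι → Set (V → K)) (U : ι → Finset V) (S : Finset V) :
    Set (V → K) :=
  {c | ∀ i ∈ I, U i ⊆ S → c ∉ bad i}

variable {I : Finset ι} {bad : ι → Set (V → K)} {U : ι → Finset V} {k : ι → ℕ} {S S' : Finset V}

lemma avoiding_anti (h : S' ⊆ S) : avoiding I bad U S ⊆ avoiding I bad U S' :=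
  fun _ hc i hi hiS => hc i hi (hiS.trans h)

lemma dependsOn_avoiding (hbad : ∀ i ∈ I, DependsOn (· ∈ bad i) (U i : Set V)) :
    DependsOn (· ∈ avoiding I bad U S) (S : Set V) := by
  refine fun c c' h => propext (forall₃_congr fun i hi hiS => not_congr ?_)
  exact iff_of_eq (hbad i hi fun v hv => h v (hiS hv))

variable [DecidableEq V]

lemma avoiding_subset_union (S : Finset V) (v : V) :
    avoiding I bad U S ⊆ avoiding I bad U (insert v S) ∪
      ⋃ i ∈ I.filter fun i => v ∈ U i ∧ U i ⊆ insert v S, avoiding I bad U S ∩ bad i := by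
  intro c hc
  by_contra hcon
  simp only [Set.mem_union, Set.mem_iUnion, Set.mem_inter_iff, Finset.mem_filter, not_or,
    not_exists, not_and] at hcon
  refine hcon.1 fun i hi hiS hbad => ?_
  by_cases hvi : v ∈ U i
  · exact hcon.2 i ⟨hi, hvi, hiS⟩ hc hbad
  · exact hc i hi ((Finset.subset_insert_iff_of_notMem hvi).mp hiS) hbad

variable [Finite V] [Finite K]

lemma ncard_avoiding_sdiff_inter_mul_pow_le (hbad : ∀ i ∈ I, DependsOn (· ∈ bad i) (U i : Set V))
    {B : Set (V → K)} {A : Finset V} (hB : B.InjOn (A : Set V)ᶜ.domRestrict) :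
    (avoiding I bad U (S \ A) ∩ B).ncard * Nat.card K ^ #A ≤ (avoiding I bad U (S \ A)).ncard :=
  ncard_mul_pow_le_ncard_of_injOn_domRestrict Set.inter_subset_left
    ((dependsOn_avoiding hbad).mono fun _ hw => (Finset.mem_sdiff.mp hw).2)
    (hB.mono Set.inter_subset_right)

variable {v : V} {β : ℝ}

-- Uncoloring the forced set `A ∋ v` costs at most a factor `(m / β) ^ (k - 1)` by `hgrowth`, while
-- forcing saves a factor `m ^ k`.
lemma ncard_avoiding_inter_le [Nonempty K] (hβ : 0 < β)
    (hbad : ∀ i ∈ I, IsForcingEvent (bad i) (U i) (k i)) (hv : v ∉ S)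
    (hgrowth : ∀ S' ⊆ S, (β / Nat.card K) ^ #(S \ S') * ((avoiding I bad U S').ncard : ℝ) ≤
      (avoiding I bad U S).ncard)
    {i : ι} (hi : i ∈ I) (hvi : v ∈ U i) (hiS : U i ⊆ insert v S) :
    ((avoiding I bad U S ∩ bad i).ncard : ℝ) ≤
      β⁻¹ ^ (k i - 1) / Nat.card K * (avoiding I bad U S).ncard := by
  obtain ⟨A, hAU, hvA, hAk, hA⟩ := (hbad i hi).exists_forced v hvi
  let m : ℝ := Nat.card K
  have hm : 0 < m := Nat.cast_pos.mpr Nat.card_pos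
  have card_sdiff : #(S \ (S \ A)) = k i - 1 := by
    have : S \ (S \ A) = A.erase v := by
      rw [sdiff_sdiff_right_self]
      ext w
      have := @hAU w
      have := @hiS w
      grind
    rw [this, Finset.card_erase_of_mem hvA, hAk]
  have pow_card : m ^ k i = m ^ (k i - 1) * m := by
    rw [← pow_succ, Nat.sub_add_cancel (hAk ▸ Finset.card_pos.mpr ⟨v, hvA⟩)]
  have forced : ((avoiding I bad U (S \ A) ∩ bad i).ncard : ℝ) * m ^ k i ≤
      (avoiding I bad U (S \ A)).ncard := by
    simp only [m, ← hAk]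
    exact_mod_cast ncard_avoiding_sdiff_inter_mul_pow_le (fun j hj => (hbad j hj).dependsOn) hA
  have inter_le : (avoiding I bad U S ∩ bad i).ncard ≤
      (avoiding I bad U (S \ A) ∩ bad i).ncard :=
    Set.ncard_le_ncard (Set.inter_subset_inter_left _ (avoiding_anti Finset.sdiff_subset))
  have key : (β ^ (k i - 1) * m) * ((avoiding I bad U S ∩ bad i).ncard : ℝ) ≤
      (avoiding I bad U S).ncard :=
    calc (β ^ (k i - 1) * m) * ((avoiding I bad U S ∩ bad i).ncard : ℝ)
        = (β / m) ^ (k i - 1) * ((avoiding I bad U S ∩ bad i).ncard * m ^ k i) := by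
          rw [pow_card, div_pow]
          field_simp
      _ ≤ (β / m) ^ (k i - 1) * ((avoiding I bad U (S \ A) ∩ bad i).ncard * m ^ k i) := by
          gcongr
      _ ≤ (β / m) ^ (k i - 1) * (avoiding I bad U (S \ A)).ncard := by gcongr
      _ ≤ (avoiding I bad U S).ncard := card_sdiff ▸ hgrowth _ Finset.sdiff_subset
  rw [inv_pow, ← one_div, div_div, one_div_mul_eq_div, le_div_iff₀' (by positivity)]
  exact key

lemma mul_ncard_avoiding_le_ncard_avoiding_insert [Nonempty K] (hβ : 0 < β)
    (hbad : ∀ i ∈ I, IsForcingEvent (bad i) (U i) (k i)) (hv : v ∉ S)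
    (hsum : β + ∑ i ∈ I with v ∈ U i, β⁻¹ ^ (k i - 1) ≤ Nat.card K)
    (hgrowth : ∀ S' ⊆ S, (β / Nat.card K) ^ #(S \ S') * ((avoiding I bad U S').ncard : ℝ) ≤
      (avoiding I bad U S).ncard) :
    β / Nat.card K * ((avoiding I bad U S).ncard : ℝ) ≤ (avoiding I bad U (insert v S)).ncard := by
  have hm : (0 : ℝ) < Nat.card K := Nat.cast_pos.mpr Nat.card_pos
  let J := I.filter fun i => v ∈ U i ∧ U i ⊆ insert v S
  have split : (avoiding I bad U S).ncard ≤ (avoiding I bad U (insert v S)).ncard +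
      ∑ i ∈ J, (avoiding I bad U S ∩ bad i).ncard :=
    (Set.ncard_le_ncard (avoiding_subset_union S v)).trans <|
      (Set.ncard_union_le _ _).trans <| Nat.add_le_add_left (J.set_ncard_biUnion_le _) _
  have sum_inter_le : ∑ i ∈ J, ((avoiding I bad U S ∩ bad i).ncard : ℝ) ≤
      (1 - β / Nat.card K) * (avoiding I bad U S).ncard :=
    calc ∑ i ∈ J, ((avoiding I bad U S ∩ bad i).ncard : ℝ)
        ≤ ∑ i ∈ J, β⁻¹ ^ (k i - 1) / Nat.card K * (avoiding I bad U S).ncard := by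
          gcongr with i hi
          obtain ⟨hiI, hvi, hiS⟩ := Finset.mem_filter.mp hi
          exact ncard_avoiding_inter_le hβ hbad hv hgrowth hiI hvi hiS
      _ = (∑ i ∈ J, β⁻¹ ^ (k i - 1)) / Nat.card K * (avoiding I bad U S).ncard := by
          rw [Finset.sum_div, Finset.sum_mul]
      _ ≤ (∑ i ∈ I with v ∈ U i, β⁻¹ ^ (k i - 1)) / Nat.card K * (avoiding I bad U S).ncard := by
          gcongr
          exact Finset.monotone_filter_right _ fun _ _ hi => hi.1
      _ ≤ (Nat.card K - β) / Nat.card K * (avoiding I bad U S).ncard := by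
          gcongr
          linarith
      _ = (1 - β / Nat.card K) * (avoiding I bad U S).ncard := by
          rw [sub_div, div_self hm.ne']
  have split' : ((avoiding I bad U S).ncard : ℝ) ≤ (avoiding I bad U (insert v S)).ncard +
      ∑ i ∈ J, ((avoiding I bad U S ∩ bad i).ncard : ℝ) := by
    exact_mod_cast split
  linarith

lemma pow_mul_ncard_avoiding_le_ncard_avoiding [Nonempty K] (hβ : 0 < β)
    (hbad : ∀ i ∈ I, IsForcingEvent (bad i) (U i) (k i))
    (hsum : ∀ v, β + ∑ i ∈ I with v ∈ U i, β⁻¹ ^ (k i - 1) ≤ Nat.card K) (h : S' ⊆ S) :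
    (β / Nat.card K) ^ #(S \ S') * ((avoiding I bad U S').ncard : ℝ) ≤
      (avoiding I bad U S).ncard := by
  induction S using Finset.strongInduction generalizing S' with
  | H S ih =>
    obtain rfl | hne := eq_or_ne S' S
    · simp
    obtain ⟨v, hvS, hvS'⟩ := Finset.exists_of_ssubset (h.ssubset_of_ne hne)
    have erase_growth : β / Nat.card K * ((avoiding I bad U (S.erase v)).ncard : ℝ) ≤
        (avoiding I bad U S).ncard := by
      simpa only [Finset.insert_erase hvS] using
        mul_ncard_avoiding_le_ncard_avoiding_insert hβ hbad (Finset.notMem_erase v S) (hsum v)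
          fun S'' hS'' => ih _ (Finset.erase_ssubset hvS) hS''
    have card_sdiff : #(S \ S') = #(S.erase v \ S') + 1 := by
      rw [Finset.erase_sdiff_comm, Finset.card_erase_add_one (Finset.mem_sdiff.mpr ⟨hvS, hvS'⟩)]
    calc (β / Nat.card K) ^ #(S \ S') * ((avoiding I bad U S').ncard : ℝ)
        = β / Nat.card K *
            ((β / Nat.card K) ^ #(S.erase v \ S') * (avoiding I bad U S').ncard) := by
          rw [card_sdiff, pow_succ', mul_assoc]
      _ ≤ β / Nat.card K * (avoiding I bad U (S.erase v)).ncard := by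
          gcongr
          exact ih _ (Finset.erase_ssubset hvS) (Finset.subset_erase.mpr ⟨h, hvS'⟩)
      _ ≤ (avoiding I bad U S).ncard := erase_growth

theorem exists_forall_notMem_of_isForcingEvent (hβ : 0 < β)
    (hbad : ∀ i ∈ I, IsForcingEvent (bad i) (U i) (k i))
    (hsum : ∀ v, β + ∑ i ∈ I with v ∈ U i, β⁻¹ ^ (k i - 1) ≤ Nat.card K) :
    ∃ c : V → K, ∀ i ∈ I, c ∉ bad i := by
  have := Fintype.ofFinite V
  obtain hV | ⟨⟨v₀⟩⟩ := isEmpty_or_nonempty V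
  · exact ⟨isEmptyElim, fun i hi => isEmptyElim (hbad i hi).nonempty.choose⟩
  have hm : (0 : ℝ) < Nat.card K :=
    (add_pos_of_pos_of_nonneg hβ (by positivity)).trans_le (hsum v₀)
  have : Nonempty K := (Nat.card_pos_iff.mp (Nat.cast_pos.mp hm)).1
  have empty_pos : 0 < (avoiding I bad U ∅).ncard := by
    refine (Set.ncard_pos).mpr ⟨fun _ => Classical.arbitrary K, fun i hi hi0 => ?_⟩
    exact absurd (Finset.subset_empty.mp hi0) (hbad i hi).nonempty.ne_empty
  have univ_pos : (0 : ℝ) < (avoiding I bad U Finset.univ).ncard :=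
    lt_of_lt_of_le (by positivity)
      (pow_mul_ncard_avoiding_le_ncard_avoiding hβ hbad hsum (Finset.empty_subset _))
  obtain ⟨c, hc⟩ := (Set.ncard_pos).mp (Nat.cast_pos.mp univ_pos)
  exact ⟨c, fun i hi => hc i hi (Finset.subset_univ _)⟩

end LocalLemma

section Coincidence

variable {α V K : Type*} {T : Finset α} {u w : α → V}

/-- The colorings `c` for which the patterns `c ∘ u` and `c ∘ w` coincide on `T`. -/
def coincidenceSet (T : Finset α) (u w : α → V) : Set (V → K) :=
  {c | ∀ t ∈ T, c (u t) = c (w t)}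

lemma coincidenceSet_comm : (coincidenceSet T u w : Set (V → K)) = coincidenceSet T w u := by
  simp only [coincidenceSet, eq_comm]

lemma isClopen_coincidenceSet [TopologicalSpace K] [DiscreteTopology K] :
    IsClopen (coincidenceSet T u w : Set (V → K)) := by
  have eq_iInter : (coincidenceSet T u w : Set (V → K)) =
      ⋂ t ∈ T, {c | c (u t) = c (w t)} := by
    ext c
    simp [coincidenceSet]
  rw [eq_iInter]
  refine isClopen_biInter_finset fun t _ => ?_
  have hcont : Continuous fun c : V → K => (c (u t), c (w t)) := by fun_prop
  exact (isClopen_discrete (Set.diagonal K)).preimage hcont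

variable [DecidableEq V]

lemma injOn_domRestrict_coincidenceSet (h : ∀ s ∈ T, ∀ t ∈ T, u s ≠ w t) :
    (coincidenceSet T u w : Set (V → K)).InjOn ((T.image u : Finset V) : Set V)ᶜ.domRestrict := by
  intro c hc c' hc' hcc'
  have eq_of_notMem (v : V) (hv : v ∉ T.image u) : c v = c' v := congrFun hcc' ⟨v, hv⟩
  funext v
  by_cases hv : v ∈ T.image u
  · obtain ⟨t, ht, rfl⟩ := Finset.mem_image.mp hv
    have hwt : w t ∉ T.image u := fun hmem => by
      obtain ⟨s, hs, hst⟩ := Finset.mem_image.mp hmem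
      exact h s hs t ht hst
    exact (hc t ht).trans ((eq_of_notMem _ hwt).trans (hc' t ht).symm)
  · exact eq_of_notMem v hv

lemma isForcingEvent_coincidenceSet (hT : T.Nonempty) (hu : Set.InjOn u T) (hw : Set.InjOn w T)
    (h : ∀ s ∈ T, ∀ t ∈ T, u s ≠ w t) :
    IsForcingEvent (coincidenceSet T u w : Set (V → K)) (T.image u ∪ T.image w) #T where
  dependsOn c c' hcc' := propext <| forall₂_congr fun t ht => by
    rw [hcc' (u t) (Finset.mem_union_left _ (Finset.mem_image_of_mem u ht)),
      hcc' (w t) (Finset.mem_union_right _ (Finset.mem_image_of_mem w ht))]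
  nonempty := (hT.image u).mono Finset.subset_union_left
  exists_forced v hv := by
    rcases Finset.mem_union.mp hv with hv | hv
    · exact ⟨T.image u, Finset.subset_union_left, hv, Finset.card_image_of_injOn hu,
        injOn_domRestrict_coincidenceSet h⟩
    · refine ⟨T.image w, Finset.subset_union_right, hv, Finset.card_image_of_injOn hw, ?_⟩
      rw [coincidenceSet_comm]
      exact injOn_domRestrict_coincidenceSet fun s hs t ht => (h t ht s hs).symm

lemma card_filter_mem_image_union_image_le (T : Finset α) (P : Finset V) (a b : α → Equiv.Perm V)
    (v : V) :
    #{p ∈ P | v ∈ T.image (a · p) ∪ T.image (b · p)} ≤ 2 * #T := by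
  have subset : P.filter (fun p => v ∈ T.image (a · p) ∪ T.image (b · p)) ⊆
      T.image (fun t => (a t).symm v) ∪ T.image (fun t => (b t).symm v) := by
    intro p hp
    simpa only [Finset.mem_union, Finset.mem_image, Equiv.symm_apply_eq, eq_comm (a := v)] using
      (Finset.mem_filter.mp hp).2
  calc #{p ∈ P | v ∈ T.image (a · p) ∪ T.image (b · p)}
      ≤ #(T.image (fun t => (a t).symm v)) + #(T.image (fun t => (b t).symm v)) :=
        (Finset.card_le_card subset).trans (Finset.card_union_le _ _)
    _ ≤ 2 * #T := by
        rw [two_mul]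
        exact Nat.add_le_add Finset.card_image_le Finset.card_image_le

end Coincidence

section Displacing

variable {Γ : Type*} [Group Γ]

/-- A family of finite sets `T g`, each moved off itself by `g ≠ 1`, whose sizes grow fast enough
that `m` colors suffice to break the coincidences between `T g` and `g * T g` for all `g ≠ 1`
simultaneously: the sum is that of `exists_forall_notMem_of_isForcingEvent` for `β = 2`, a point
being in the support of at most `2 * #(T g)` events with label `g`. -/
structure IsDisplacing (T : Γ → Finset Γ) (m : ℕ) : Prop where
  nonempty : ∀ g ≠ 1, (T g).Nonempty
  mul_notMem : ∀ g ≠ 1, ∀ t ∈ T g, g * t ∉ T g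
  two_add_sum_le : ∀ F : Finset Γ, 2 + ∑ g ∈ F, 2 * #(T g) * (2⁻¹ : ℝ) ^ (#(T g) - 1) ≤ m

lemma exists_finset_card_eq_forall_mul_notMem [Infinite Γ] {g : Γ} (hg : g ≠ 1) (n : ℕ) :
    ∃ T : Finset Γ, #T = n ∧ ∀ t ∈ T, g * t ∉ T := by
  classical
  induction n with
  | zero => exact ⟨∅, by simp⟩
  | succ n ih =>
    obtain ⟨T, hTn, hT⟩ := ih
    obtain ⟨x, hx⟩ := Infinite.exists_notMem_finset (T ∪ T.image (g * ·) ∪ T.image (g⁻¹ * ·))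
    simp only [Finset.mem_union, Finset.mem_image, not_or, not_exists, not_and] at hx
    obtain ⟨⟨hxT, hx_mul⟩, hx_inv⟩ := hx
    refine ⟨insert x T, by rw [Finset.card_insert_of_notMem hxT, hTn], fun t ht hgt => ?_⟩
    rcases Finset.mem_insert.mp ht with rfl | htT <;> rcases Finset.mem_insert.mp hgt with h | hgtT
    · exact hg (mul_eq_right.mp h)
    · exact hx_inv _ hgtT (inv_mul_cancel_left g t)
    · exact hx_mul t htT h
    · exact hT t htT hgtT

lemma exists_summable_forall_mul_notMem (Γ : Type*) [Group Γ] [Countable Γ] :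
    ∃ T : Γ → Finset Γ, (∀ g ≠ 1, (T g).Nonempty) ∧ (∀ g ≠ 1, ∀ t ∈ T g, g * t ∉ T g) ∧
      Summable fun g => 2 * #(T g) * (2⁻¹ : ℝ) ^ (#(T g) - 1) := by
  obtain hfin | hinf := finite_or_infinite Γ
  · exact ⟨fun _ => {1}, fun _ _ => Finset.singleton_nonempty 1, by simp, Summable.of_finite⟩
  obtain ⟨e, he⟩ := exists_injective_nat Γ
  have hex (g : Γ) : ∃ T : Finset Γ, #T = e g + 1 ∧ (g ≠ 1 → ∀ t ∈ T, g * t ∉ T) := by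
    by_cases hg : g = 1
    · obtain ⟨T, hT⟩ := Infinite.exists_subset_card_eq Γ (e g + 1)
      exact ⟨T, hT, fun h => absurd hg h⟩
    · obtain ⟨T, hT, hgT⟩ := exists_finset_card_eq_forall_mul_notMem hg (e g + 1)
      exact ⟨T, hT, fun _ => hgT⟩
  choose T hT_card hT using hex
  refine ⟨T, fun g _ => Finset.card_pos.mp (hT_card g ▸ Nat.succ_pos _), hT, ?_⟩
  have summable_nat : Summable fun n : ℕ => 2 * ((n + 1 : ℕ) : ℝ) * 2⁻¹ ^ n := by
    have linear : Summable fun n : ℕ => (n : ℝ) ^ 1 * 2⁻¹ ^ n :=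
      summable_pow_mul_geometric_of_norm_lt_one 1 (by norm_num)
    have geometric : Summable fun n : ℕ => (2⁻¹ : ℝ) ^ n :=
      summable_geometric_of_lt_one (by norm_num) (by norm_num)
    refine ((linear.add geometric).mul_left 2).congr fun n => ?_
    push_cast
    ring
  simpa only [hT_card, Nat.add_sub_cancel, Function.comp_def] using summable_nat.comp_injective he

lemma exists_isDisplacing (Γ : Type*) [Group Γ] [Countable Γ] :
    ∃ (T : Γ → Finset Γ) (m : ℕ), IsDisplacing T m := by
  obtain ⟨T, hT_nonempty, hT_mul, hT_summable⟩ := exists_summable_forall_mul_notMem Γ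
  obtain ⟨M, hM⟩ := exists_nat_ge (∑' g, 2 * #(T g) * (2⁻¹ : ℝ) ^ (#(T g) - 1))
  refine ⟨T, 2 + M, hT_nonempty, hT_mul, fun F => ?_⟩
  push_cast
  gcongr
  exact (hT_summable.sum_le_tsum F fun g _ => by positivity).trans hM

lemma IsDisplacing.two_le {T : Γ → Finset Γ} {m : ℕ} (hT : IsDisplacing T m) : 2 ≤ m := by
  simpa using hT.two_add_sum_le ∅

theorem IsDisplacing.exists_forall_notMem_coincidenceSet {V K : Type*} [Finite V] [Finite K]
    {T : Γ → Finset Γ} (hT : IsDisplacing T (Nat.card K)) {F : Finset Γ} (hF : 1 ∉ F)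
    {D : Set Γ} (hD : ∀ g ∈ F, ∀ t ∈ T g, t ∈ D ∧ g * t ∈ D) {a : Γ → Equiv.Perm V} {P : Finset V}
    (hinj : ∀ p ∈ P, D.InjOn (a · p)) :
    ∃ c : V → K, ∀ g ∈ F, ∀ p ∈ P, c ∉ coincidenceSet (T g) (a · p) (fun t => a (g * t) p) := by
  classical
  let U (i : Γ × V) : Finset V := (T i.1).image (a · i.2) ∪ (T i.1).image (fun t => a (i.1 * t) i.2)
  have forcing : ∀ i ∈ F ×ˢ P, IsForcingEvent
      (coincidenceSet (T i.1) (a · i.2) (fun t => a (i.1 * t) i.2) : Set (V → K))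
      (U i) #(T i.1) := by
    rintro ⟨g, p⟩ hi
    obtain ⟨hg, hp⟩ := Finset.mem_product.mp hi
    have hg1 : g ≠ 1 := ne_of_mem_of_not_mem hg hF
    refine isForcingEvent_coincidenceSet (hT.nonempty g hg1) ?_ ?_ ?_
    · exact (hinj p hp).mono fun t ht => (hD g hg t ht).1
    · exact fun s hs t ht hst =>
        mul_left_cancel (hinj p hp (hD g hg s hs).2 (hD g hg t ht).2 hst)
    · intro s hs t ht hst
      exact hT.mul_notMem g hg1 t ht (hinj p hp (hD g hg s hs).1 (hD g hg t ht).2 hst ▸ hs)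
  have sum_le (v : V) : 2 + ∑ i ∈ F ×ˢ P with v ∈ U i, (2⁻¹ : ℝ) ^ (#(T i.1) - 1) ≤ Nat.card K :=
    calc 2 + ∑ i ∈ F ×ˢ P with v ∈ U i, (2⁻¹ : ℝ) ^ (#(T i.1) - 1)
        = 2 + ∑ g ∈ F, #{p ∈ P | v ∈ U (g, p)} * (2⁻¹ : ℝ) ^ (#(T g) - 1) := by
          simp only [Finset.sum_filter, Finset.sum_product, ← nsmul_eq_mul, ← Finset.sum_const]
      _ ≤ 2 + ∑ g ∈ F, 2 * #(T g) * (2⁻¹ : ℝ) ^ (#(T g) - 1) := by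
          gcongr with g
          exact_mod_cast card_filter_mem_image_union_image_le (T g) P a (fun t => a (g * t)) v
      _ ≤ Nat.card K := hT.two_add_sum_le F
  obtain ⟨c, hc⟩ := exists_forall_notMem_of_isForcingEvent two_pos forcing sum_le
  exact ⟨c, fun g hg p hp => hc (g, p) (Finset.mk_mem_product hg hp)⟩

end Displacing

section SoficApproximation

/-- `p` behaves, with respect to the finite set `D`, like a point of a free `Γ`-action: `σ` is
multiplicative at `p` for factors in `D`, and moves `p` to distinct points along `D`. -/
structure IsGoodVertex {Γ V : Type*} [Group Γ] (σ : Γ → Equiv.Perm V) (D : Finset Γ) (p : V) :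
    Prop where
  map_mul : ∀ x ∈ D, ∀ y ∈ D, σ (x * y) p = σ x (σ y p)
  injOn : Set.InjOn (σ · p) D

/-- Soficity of an arbitrary group, without reference to generators: every finite part of the
multiplication table is modelled by permutations of a finite set at most of its points. -/
def IsSoficGroup (Γ : Type*) [Group Γ] : Prop :=
  ∀ (D : Finset Γ) (ε : ℝ), 0 < ε → ∃ (V : Type) (_ : Fintype V) (_ : Nonempty V)
    (σ : Γ → Equiv.Perm V), (1 - ε) * Fintype.card V ≤ {p | IsGoodVertex σ D p}.ncard

lemma IsGammaRVertex.isGoodVertex {Γ : Type} [Group Γ] {n : ℕ} {γ : Fin n → Γ} {V : Type}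
    {ρ : FreeGroup (Fin n) →* Equiv.Perm V} {r : ℕ} {p : V} (hp : IsGammaRVertex γ ρ r p)
    {τ : Γ → FreeGroup (Fin n)} (hτ : ∀ x, FreeGroup.lift γ (τ x) = x) {D : Finset Γ}
    (hr : ∀ x ∈ D, wordLength (τ x) ≤ r)
    (hr_mul : ∀ x ∈ D, ∀ y ∈ D,
      wordLength (τ (x * y)) ≤ r ∧ wordLength (τ x * τ y) ≤ r) :
    IsGoodVertex (fun x => ρ (τ x)) D p where
  map_mul x hx y hy := by
    rw [← Equiv.Perm.mul_apply, ← _root_.map_mul]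
    exact (hp _ _ (hr_mul x hx y hy).1 (hr_mul x hx y hy).2).mpr (by simp only [_root_.map_mul, hτ])
  injOn x hx y hy hxy := by
    simpa only [hτ] using (hp _ _ (hr x hx) (hr y hy)).mp hxy

lemma IsSofic.isSoficGroup {Γ : Type} [Group Γ] {n : ℕ} {γ : Fin n → Γ} (h : IsSofic γ)
    (hγ : Function.Surjective (FreeGroup.lift γ)) : IsSoficGroup Γ := by
  classical
  choose τ hτ using hγ
  intro D ε hε
  let W : Finset (FreeGroup (Fin n)) :=
    D.image τ ∪ ((D ×ˢ D).image (fun q => τ (q.1 * q.2)) ∪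
      (D ×ˢ D).image fun q => τ q.1 * τ q.2)
  let r := W.sup wordLength + 1
  have le_r {w : FreeGroup (Fin n)} (hw : w ∈ W) : wordLength w ≤ r :=
    (Finset.le_sup hw).trans (Nat.le_succ _)
  obtain ⟨V, hV, hV', ρ, hρ⟩ := h r (Nat.le_add_left 1 _) ε hε
  refine ⟨V, hV, hV', fun x => ρ (τ x), hρ.trans <| Nat.cast_le.mpr <|
    Set.ncard_le_ncard fun p (hp : IsGammaRVertex γ ρ r p) => ?_⟩
  refine hp.isGoodVertex hτ (fun x hx => le_r ?_) fun x hx y hy => ⟨le_r ?_, le_r ?_⟩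
  · exact Finset.mem_union_left _ (Finset.mem_image_of_mem τ hx)
  · exact Finset.mem_union_right _ <| Finset.mem_union_left _ <|
      Finset.mem_image.mpr ⟨(x, y), Finset.mk_mem_product hx hy, rfl⟩
  · exact Finset.mem_union_right _ <| Finset.mem_union_right _ <|
      Finset.mem_image.mpr ⟨(x, y), Finset.mk_mem_product hx hy, rfl⟩

end SoficApproximation

section EmpiricalMeasure

variable {V Ω : Type*} [Fintype V] [Nonempty V] [MeasurableSpace Ω]

/-- The distribution of `Φ p` for a uniformly random point `p` of a finite set. -/
noncomputable def empiricalMeasure (Φ : V → Ω) : ProbabilityMeasure Ω :=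
  ⟨((PMF.uniformOfFintype V).map Φ).toMeasure, inferInstance⟩

lemma empiricalMeasure_apply (Φ : V → Ω) {A : Set Ω} (hA : MeasurableSet A) :
    (empiricalMeasure Φ A : ℝ) = (Φ ⁻¹' A).ncard / Fintype.card V := by
  classical
  change (((PMF.uniformOfFintype V).map Φ).toMeasure A).toReal = _
  rw [PMF.toMeasure_apply_eq_toOuterMeasure_apply _ hA, PMF.toOuterMeasure_map_apply,
    PMF.toOuterMeasure_uniformOfFintype_apply, ENNReal.toReal_div, ENNReal.toReal_natCast,
    ENNReal.toReal_natCast, ← Nat.card_eq_fintype_card, Nat.card_coe_set_eq]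

lemma empiricalMeasure_le_add {Φ : V → Ω} {A B : Set Ω} (hA : MeasurableSet A)
    (hB : MeasurableSet B) {ε : ℝ≥0} {G : Set V} (hG : (1 - ε) * Fintype.card V ≤ (G.ncard : ℝ))
    (e : Equiv.Perm V) (h : ∀ p ∈ G, Φ p ∈ A → Φ (e p) ∈ B) :
    empiricalMeasure Φ A ≤ empiricalMeasure Φ B + ε := by
  have card_pos : (0 : ℝ) < Fintype.card V := Nat.cast_pos.mpr Fintype.card_pos
  have ncard_le : (Φ ⁻¹' A).ncard ≤ (Φ ⁻¹' B).ncard + Gᶜ.ncard :=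
    calc (Φ ⁻¹' A).ncard ≤ (e ⁻¹' (Φ ⁻¹' B) ∪ Gᶜ).ncard :=
          Set.ncard_le_ncard fun p hp => (em (p ∈ G)).imp (fun hpG => h p hpG hp) id
      _ ≤ (e ⁻¹' (Φ ⁻¹' B)).ncard + Gᶜ.ncard := Set.ncard_union_le _ _
      _ = (Φ ⁻¹' B).ncard + Gᶜ.ncard := by
          rw [Set.ncard_preimage_of_injective_subset_range e.injective (by simp)]
  have ncard_compl_le : (Gᶜ.ncard : ℝ) ≤ ε * Fintype.card V := by
    have : (G.ncard : ℝ) + Gᶜ.ncard = Fintype.card V := by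
      exact_mod_cast Nat.card_eq_fintype_card (α := V) ▸ Set.ncard_add_ncard_compl G
    linarith
  rw [← NNReal.coe_le_coe, NNReal.coe_add, empiricalMeasure_apply Φ hA,
    empiricalMeasure_apply Φ hB, div_add' _ _ _ card_pos.ne']
  gcongr
  have : ((Φ ⁻¹' A).ncard : ℝ) ≤ (Φ ⁻¹' B).ncard + Gᶜ.ncard := by exact_mod_cast ncard_le
  linarith

end EmpiricalMeasure

section Shift

variable {Γ K : Type} [Group Γ]

lemma shiftMap_shiftMap (g h : Γ) (f : Γ → K) : shiftMap g (shiftMap h f) = shiftMap (g * h) f := by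
  funext x
  simp only [shiftMap, mul_inv_rev, mul_assoc]

lemma measurable_shiftMap [MeasurableSpace K] (g : Γ) : Measurable (shiftMap (K := K) g) :=
  measurable_pi_lambda _ fun x => measurable_pi_apply (g⁻¹ * x)

lemma continuous_shiftMap [TopologicalSpace K] (g : Γ) : Continuous (shiftMap (K := K) g) :=
  continuous_pi fun x => continuous_apply (g⁻¹ * x)

/-- The coloring of `Γ` read off from the coloring `c` along the `σ`-orbit of `p`; the inverse turns
right translations of the orbit into left shifts. -/
def orbitColoring {V : Type*} (σ : Γ → Equiv.Perm V) (c : V → K) (p : V) : Γ → K :=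
  fun x => c (σ x⁻¹ p)

lemma IsGoodVertex.orbitColoring_apply {V : Type*} {σ : Γ → Equiv.Perm V} {D : Finset Γ} {p : V}
    (hp : IsGoodVertex σ D p) (c : V → K) {g x : Γ} (hg : g ∈ D) (hx : x⁻¹ ∈ D) :
    orbitColoring σ c (σ g p) x = shiftMap g (orbitColoring σ c p) x := by
  simp only [orbitColoring, shiftMap, mul_inv_rev, inv_inv, hp.map_mul _ hx _ hg]

end Shift

section InvariantMeasure

lemma measurePreserving_of_measure_preimage_cylinder_le {α : Type*} {X : α → Type*}
    [∀ a, MeasurableSpace (X a)] {μ : Measure (Π a, X a)} [IsProbabilityMeasure μ]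
    {f : (Π a, X a) → Π a, X a} (hf : Measurable f)
    (h : ∀ (S : Finset α) (A : Set (Π a : S, X a)), MeasurableSet A →
      μ (f ⁻¹' cylinder S A) ≤ μ (cylinder S A)) :
    MeasurePreserving f μ μ := by
  have := Measure.isProbabilityMeasure_map (μ := μ) hf.aemeasurable
  refine ⟨hf, ext_of_generate_finite _ generateFrom_measurableCylinders.symm
    isPiSystem_measurableCylinders (fun C hC => ?_) (by simp only [measure_univ])⟩
  obtain ⟨S, A, hA, rfl⟩ := (mem_measurableCylinders C).mp hC
  rw [Measure.map_apply hf (hA.cylinder S)]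
  refine le_antisymm (h S A hA) ?_
  have compl_le := h S Aᶜ hA.compl
  rw [← compl_cylinder, Set.preimage_compl, prob_compl_eq_one_sub (hA.cylinder S),
    prob_compl_eq_one_sub (hf (hA.cylinder S))] at compl_le
  exact (ENNReal.sub_le_sub_iff_left prob_le_one ENNReal.one_ne_top).mp compl_le

lemma isClopen_cylinder {α : Type*} {X : α → Type*} [∀ a, TopologicalSpace (X a)]
    [∀ a, DiscreteTopology (X a)] (S : Finset α) (A : Set (Π a : S, X a)) :
    IsClopen (cylinder S A) :=
  (isClopen_discrete A).preimage (Finset.continuous_restrict S)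

lemma continuous_probabilityMeasure_apply {Ω : Type*} [TopologicalSpace Ω] [MeasurableSpace Ω]
    [OpensMeasurableSpace Ω] [HasOuterApproxClosed Ω] {A : Set Ω} (hA : IsClopen A) :
    Continuous fun μ : ProbabilityMeasure Ω => μ A :=
  continuous_iff_continuousAt.mpr fun _ =>
    ProbabilityMeasure.tendsto_measure_of_isClopen_of_tendsto Filter.tendsto_id hA

variable {Γ K : Type} [Group Γ] [MeasurableSpace K] {T : Γ → Finset Γ} {F F' : Finset Γ}
  {ε ε' : ℝ≥0}

/-- The probability measures on `Γ → K` that are invariant up to `ε` under shifts by elements of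
`F`, as tested on cylinders with base in `F`, and that give mass at most `ε` to the functions
repeating on `g * T g` their pattern on `T g`, for `g ∈ F`. -/
def almostInvariantMeasures (K : Type) [MeasurableSpace K] (T : Γ → Finset Γ) (F : Finset Γ)
    (ε : ℝ≥0) : Set (ProbabilityMeasure (Γ → K)) :=
  {ν | (∀ g ∈ F, g ≠ 1 → ν (coincidenceSet (T g) id (g * ·)) ≤ ε) ∧
    ∀ g ∈ F, ∀ S ⊆ F, ∀ A : Set (S → K),
      ν (shiftMap g ⁻¹' cylinder S A) ≤ ν (cylinder S A) + ε}

lemma almostInvariantMeasures_mono (hF : F ⊆ F') (hε : ε' ≤ ε) :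
    almostInvariantMeasures K T F' ε' ⊆ almostInvariantMeasures K T F ε := fun _ hν =>
  ⟨fun g hg hg1 => (hν.1 g (hF hg) hg1).trans hε, fun g hg S hS A =>
    (hν.2 g (hF hg) S (hS.trans hF) A).trans (by gcongr)⟩

variable [TopologicalSpace K] [DiscreteTopology K] [Countable Γ] [Finite K] [BorelSpace K]

lemma isClosed_almostInvariantMeasures : IsClosed (almostInvariantMeasures K T F ε) := by
  simp only [almostInvariantMeasures, Set.ofPred_and, Set.ofPred_forall]
  refine IsClosed.inter ?_ ?_
  · refine isClosed_iInter fun g => isClosed_iInter fun _ => isClosed_iInter fun _ => ?_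
    exact isClosed_le (continuous_probabilityMeasure_apply isClopen_coincidenceSet) continuous_const
  · refine isClosed_iInter fun g => isClosed_iInter fun _ => isClosed_iInter fun S =>
      isClosed_iInter fun _ => isClosed_iInter fun A => ?_
    have hA : IsClopen (cylinder S A : Set (Γ → K)) := isClopen_cylinder (X := fun _ => K) S A
    exact isClosed_le
      (continuous_probabilityMeasure_apply (hA.preimage (continuous_shiftMap g)))
      ((continuous_probabilityMeasure_apply hA).add_const ε)

lemma IsSoficGroup.nonempty_almostInvariantMeasures (h : IsSoficGroup Γ)
    (hT : IsDisplacing T (Nat.card K)) (F : Finset Γ) (hε : 0 < ε) :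
    (almostInvariantMeasures K T F ε).Nonempty := by
  classical
  let E : Finset Γ := F ∪ F.biUnion fun g => T g ∪ (T g).image (g * ·)
  obtain ⟨V, _, _, σ, hσ⟩ := h (F ∪ E⁻¹) ε (NNReal.coe_pos.mpr hε)
  have inv_mem {x : Γ} (hx : x ∈ E) : x⁻¹ ∈ F ∪ E⁻¹ :=
    Finset.mem_union_right _ (Finset.inv_mem_inv hx)
  let P : Finset V := {p | IsGoodVertex σ (F ∪ E⁻¹) p}
  have subset_E : ∀ g ∈ F.erase 1, ∀ t ∈ T g, t ∈ (E : Set Γ) ∧ g * t ∈ (E : Set Γ) := by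
    intro g hg t ht
    constructor <;> refine Finset.mem_union_right _ (Finset.mem_biUnion.mpr
      ⟨g, Finset.mem_of_mem_erase hg, ?_⟩)
    · exact Finset.mem_union_left _ ht
    · exact Finset.mem_union_right _ (Finset.mem_image_of_mem _ ht)
  have injOn_E : ∀ p ∈ P, (E : Set Γ).InjOn fun x => σ x⁻¹ p := fun p hp x hx y hy hxy =>
    inv_injective ((Finset.mem_filter.mp hp).2.injOn (inv_mem hx) (inv_mem hy) hxy)
  obtain ⟨c, hc⟩ := hT.exists_forall_notMem_coincidenceSet (Finset.notMem_erase 1 F) subset_E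
    (a := fun x => σ x⁻¹) injOn_E
  refine ⟨empiricalMeasure (orbitColoring σ c), fun g hg hg1 => ?_, fun g hg S hS A => ?_⟩
  · simpa using empiricalMeasure_le_add isClopen_coincidenceSet.isOpen.measurableSet .empty hσ
      1 fun p hp => hc g (Finset.mem_erase.mpr ⟨hg1, hg⟩) p (by simpa [P] using hp)
  · have hA := (isClopen_cylinder (X := fun _ => K) S A).isOpen.measurableSet
    refine empiricalMeasure_le_add (measurable_shiftMap g hA) hA hσ (σ g) fun p hp hpA => ?_
    have restrict_eq : S.restrict (orbitColoring σ c (σ g p)) =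
        S.restrict (shiftMap g (orbitColoring σ c p)) := funext fun x =>
      IsGoodVertex.orbitColoring_apply hp c (Finset.mem_union_left _ hg)
        (inv_mem (Finset.mem_union_left _ (hS x.2)))
    rwa [mem_cylinder, restrict_eq]

theorem IsSoficGroup.exists_invariant_measure (h : IsSoficGroup Γ)
    (hT : IsDisplacing T (Nat.card K)) :
    ∃ μ : ProbabilityMeasure (Γ → K), (∀ g ≠ 1, μ (coincidenceSet (T g) id (g * ·)) = 0) ∧
      ∀ g, MeasurePreserving (shiftMap g) (μ : Measure (Γ → K)) μ := by
  classical
  obtain ⟨μ, hμ⟩ : (⋂ i : Finset Γ × ℕ,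
      almostInvariantMeasures K T i.1 (1 / (i.2 + 1))).Nonempty := by
    refine IsCompact.nonempty_iInter_of_directed_nonempty_isCompact_isClosed _ ?_
      (fun i => h.nonempty_almostInvariantMeasures hT i.1 (by positivity))
      (fun _ => isClosed_almostInvariantMeasures.isCompact)
      (fun _ => isClosed_almostInvariantMeasures)
    refine Antitone.directed_ge fun i j hij => ?_
    exact almostInvariantMeasures_mono hij.1 (Nat.one_div_le_one_div hij.2)
  have le_add (F : Finset Γ) (n : ℕ) : μ ∈ almostInvariantMeasures K T F (1 / (n + 1)) :=
    Set.mem_iInter.mp hμ (F, n)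
  have tendsto_zero : Filter.Tendsto (fun n : ℕ => (1 / (n + 1) : ℝ≥0)) Filter.atTop (nhds 0) :=
    tendsto_one_div_add_atTop_nhds_zero_nat
  refine ⟨μ, fun g hg => ?_, fun g => ?_⟩
  · exact le_antisymm (ge_of_tendsto' tendsto_zero fun n =>
      (le_add {g} n).1 g (Finset.mem_singleton_self g) hg) zero_le
  · refine measurePreserving_of_measure_preimage_cylinder_le (measurable_shiftMap g)
      fun S A _ => ?_
    simp only [← ProbabilityMeasure.ennreal_coeFn_eq_coeFn_toMeasure, ENNReal.coe_le_coe]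
    refine ge_of_tendsto' (by simpa using tendsto_zero.const_add _) fun n =>
      (le_add (insert g S) n).2 g (Finset.mem_insert_self g S) S (Finset.subset_insert g S) A

end InvariantMeasure

section Subshift

variable {Γ K : Type} [Group Γ] {T : Γ → Finset Γ}

/-- The functions no translate of which repeats on `g * T g` its pattern on `T g`, for any
`g ≠ 1`. -/
def coincidenceFreeSubshift (K : Type) (T : Γ → Finset Γ) : Set (Γ → K) :=
  ⋂ (h : Γ) (g : Γ) (_ : g ≠ 1), shiftMap h ⁻¹' (coincidenceSet (T g) id (g * ·))ᶜ

lemma mem_coincidenceFreeSubshift {f : Γ → K} : f ∈ coincidenceFreeSubshift K T ↔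
    ∀ h g, g ≠ 1 → shiftMap h f ∉ coincidenceSet (T g) id (g * ·) := by
  simp only [coincidenceFreeSubshift, Set.mem_iInter, Set.mem_preimage, Set.mem_compl_iff]

lemma isClosed_coincidenceFreeSubshift [TopologicalSpace K] [DiscreteTopology K] :
    IsClosed (coincidenceFreeSubshift K T) :=
  isClosed_iInter fun h => isClosed_iInter fun _ => isClosed_iInter fun _ =>
    isClopen_coincidenceSet.compl.isClosed.preimage (continuous_shiftMap h)

lemma shiftMap_mem_coincidenceFreeSubshift (g : Γ) {f : Γ → K}
    (hf : f ∈ coincidenceFreeSubshift K T) : shiftMap g f ∈ coincidenceFreeSubshift K T :=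
  mem_coincidenceFreeSubshift.mpr fun h g' hg' => by
    rw [shiftMap_shiftMap]
    exact mem_coincidenceFreeSubshift.mp hf (h * g) g' hg'

lemma shiftMap_ne_of_mem_coincidenceFreeSubshift {f : Γ → K}
    (hf : f ∈ coincidenceFreeSubshift K T) {g : Γ} (hg : g ≠ 1) : shiftMap g f ≠ f := fun hgf => by
  refine mem_coincidenceFreeSubshift.mp hf g g⁻¹ (inv_ne_one.mpr hg) fun t _ => ?_
  rw [hgf]
  exact (congrFun hgf t).symm

lemma measure_coincidenceFreeSubshift [Countable Γ] [TopologicalSpace K] [DiscreteTopology K]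
    [Finite K] [MeasurableSpace K] [BorelSpace K] {μ : Measure (Γ → K)} [IsProbabilityMeasure μ]
    (hμ : ∀ g, MeasurePreserving (shiftMap g) μ μ)
    (hnull : ∀ g ≠ 1, μ (coincidenceSet (T g) id (g * ·)) = 0) :
    μ (coincidenceFreeSubshift K T) = 1 := by
  rw [← prob_compl_eq_zero_iff isClosed_coincidenceFreeSubshift.measurableSet]
  simp only [coincidenceFreeSubshift, Set.compl_iInter, Set.preimage_compl, compl_compl]
  refine measure_iUnion_null fun h => measure_iUnion_null fun g => measure_iUnion_null fun hg => ?_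
  rw [(hμ h).measure_preimage isClopen_coincidenceSet.isOpen.nullMeasurableSet, hnull g hg]

end Subshift

theorem sofic_group_has_free_subshift_with_invariant_measure_general
    {Γ : Type} [Group Γ] [Countable Γ] (hsofic : IsSoficGroup Γ) :
    ∃ m : ℕ, 2 ≤ m ∧
      ∃ Y : Set (Γ → Fin m),
        Y.Nonempty ∧ IsClosed Y ∧
        (∀ g : Γ, ∀ f ∈ Y, shiftMap g f ∈ Y) ∧
        (∀ f ∈ Y, ∀ g : Γ, g ≠ 1 → shiftMap g f ≠ f) ∧
        ∃ μ : Measure (Γ → Fin m),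
          IsProbabilityMeasure μ ∧ μ Y = 1 ∧
          ∀ g : Γ, MeasurePreserving (shiftMap g) μ μ := by
  obtain ⟨T, m, hT⟩ := exists_isDisplacing Γ
  obtain ⟨μ, hnull, hμ⟩ :=
    hsofic.exists_invariant_measure (K := Fin m) ((Nat.card_fin m).symm ▸ hT)
  have measure_eq_one : (μ : Measure (Γ → Fin m)) (coincidenceFreeSubshift (Fin m) T) = 1 :=
    measure_coincidenceFreeSubshift hμ fun g hg =>
      (ProbabilityMeasure.null_iff_toMeasure_null _ _).mp (hnull g hg)
  exact ⟨m, hT.two_le, coincidenceFreeSubshift (Fin m) T,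
    nonempty_of_measure_ne_zero (measure_eq_one ▸ one_ne_zero),
    isClosed_coincidenceFreeSubshift,
    fun g _ hf => shiftMap_mem_coincidenceFreeSubshift g hf,
    fun _ hf _ hg => shiftMap_ne_of_mem_coincidenceFreeSubshift hf hg,
    μ, inferInstance, measure_eq_one, hμ⟩

/-- every finitely generated sofic group admits a free Bernoulli subshift
carrying an invariant Borel probability measure. Here the alphabet is `Fin m`
(with `2 ≤ m`), carrying the discrete topology, and `Γ → Fin m` carries the product
topology and the product σ-algebra. -/
theorem sofic_group_has_free_subshift_with_invariant_measure
    {Γ : Type} [Group Γ] {n : ℕ} (γ : Fin n → Γ)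
    (hgen : Subgroup.closure (Set.range γ) = ⊤)
    (hsym : ∀ i : Fin n, (γ i)⁻¹ ∈ Set.range γ)
    (hsofic : IsSofic γ) :
    ∃ m : ℕ, 2 ≤ m ∧
      ∃ Y : Set (Γ → Fin m),
        Y.Nonempty ∧ IsClosed Y ∧
        (∀ g : Γ, ∀ f ∈ Y, shiftMap g f ∈ Y) ∧
        (∀ f ∈ Y, ∀ g : Γ, g ≠ 1 → shiftMap g f ≠ f) ∧
        ∃ μ : Measure (Γ → Fin m),
          IsProbabilityMeasure μ ∧ μ Y = 1 ∧
          ∀ g : Γ, MeasurePreserving (shiftMap g) μ μ := by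
  have hsurj : Function.Surjective (FreeGroup.lift γ) := by
    rw [← MonoidHom.range_eq_top, FreeGroup.range_lift_eq_closure, hgen]
  have : Countable Γ := hsurj.countable
  exact sofic_group_has_free_subshift_with_invariant_measure_general (hsofic.isSoficGroup hsurj)
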